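/- (Q-node partition.) The sets comp(N_1), …, comp(N_k) are pairwise disjoint subsets of inner(Q), and every I ∈ inner(Q) that is not discarded belongs to exactly one set comp(N_i). -/

import Mathlib

open Set

variable {Λ W ι : Type*}

/-- The clique of a leaf: vertices whose `Cl`-set contains the leaf. -/
def leafC (Cl : W → Set Λ) (ℓ : Λ) : Set W := {v | ℓ ∈ Cl v}

/-- `V(N)`: vertices with `Cl(v) ⊆ N`. -/
def Vset (Cl : W → Set Λ) (N : Set Λ) : Set W := {v | Cl v ⊆ N}

/-- `U(N)`: vertices with `Cl(v) = N`. -/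
def Uset (Cl : W → Set Λ) (N : Set Λ) : Set W := {v | Cl v = N}

/-- `I(N)`: vertices with `Cl(v) ⊊ N`. -/
def Iset (Cl : W → Set Λ) (N : Set Λ) : Set W := {v | Cl v ⊂ N}

/-- `E(N)`: vertices with `N ⊊ Cl(v)`. -/
def Eset (Cl : W → Set Λ) (N : Set Λ) : Set W := {v | N ⊂ Cl v}

/-- A vertex is compatible with a node `N`. -/
def Compatible (Cl : W → Set Λ) (v : W) (N : Set Λ) : Prop :=
  Cl v ⊆ N ∨ N ⊆ Cl v ∨ Cl v ∩ N = ∅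

/-- `inner(N)`: for a singleton node `{ℓ}` the components with `C(I) = C(ℓ)`;
for a non-singleton node the components with `C(I) ∩ I(N) ≠ ∅` and
`U(N) ∪ E(N) ⊊ C(I)`. -/
def innerSet (Cl : W → Set Λ) (CI : ι → Set W) (N : Set Λ) : Set ι :=
  {I | (∃ ℓ, N = {ℓ} ∧ CI I = leafC Cl ℓ) ∨
       ((¬ ∃ ℓ, N = {ℓ}) ∧ (CI I ∩ Iset Cl N).Nonempty ∧
        Uset Cl N ∪ Eset Cl N ⊂ CI I)}

/-- `middle_M(N) = {I ∈ inner(M) \ inner(N) : C(I) ∩ V(N) ≠ ∅}`. -/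
def middleSet (Cl : W → Set Λ) (CI : ι → Set W) (M N : Set Λ) : Set ι :=
  {I | I ∈ innerSet Cl CI M ∧ I ∉ innerSet Cl CI N ∧ (CI I ∩ Vset Cl N).Nonempty}

/-- `J(v) = {i ∈ [k] : N_i ⊆ Cl(v)}`. -/
def Jnat (Cl : W → Set Λ) (N : ℕ → Set Λ) (k : ℕ) (v : W) : Set ℕ :=
  {i | i ∈ Set.Icc 1 k ∧ N i ⊆ Cl v}

/-- `I'(Q) = I(Q) \ ⋃ᵢ V(Nᵢ)`. -/
def IprimeQ (Cl : W → Set Λ) (Q : Set Λ) (N : ℕ → Set Λ) (k : ℕ) : Set W :=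
  Iset Cl Q \ ⋃ i ∈ Set.Icc 1 k, Vset Cl (N i)

/-- `rest(Q) = inner(Q) \ ⋃ᵢ (middle_Q(Nᵢ) ∪ inner(Nᵢ))`. -/
def restQ (Cl : W → Set Λ) (CI : ι → Set W) (Q : Set Λ) (N : ℕ → Set Λ) (k : ℕ) : Set ι :=
  innerSet Cl CI Q \
    ⋃ i ∈ Set.Icc 1 k, (middleSet Cl CI Q (N i) ∪ innerSet Cl CI (N i))

/-- `J(I) = ⋂_{v ∈ C(I) ∩ I'(Q)} J(v)`. -/
def JIset (Cl : W → Set Λ) (CI : ι → Set W) (Q : Set Λ) (N : ℕ → Set Λ) (k : ℕ)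
    (I : ι) : Set ℕ :=
  ⋂ v ∈ CI I ∩ IprimeQ Cl Q N k, Jnat Cl N k v

/-- A set of naturals is an interval (order-convex). -/
def IsIntervalIn (s : Set ℕ) : Prop :=
  ∀ a b c : ℕ, a ≤ b → b ≤ c → a ∈ s → c ∈ s → b ∈ s

/-- `j₁`, the left endpoint of `J(I)`. -/
noncomputable def jLo (Cl : W → Set Λ) (CI : ι → Set W) (Q : Set Λ) (N : ℕ → Set Λ)
    (k : ℕ) (I : ι) : ℕ :=
  sInf (JIset Cl CI Q N k I)

/-- `j₂`, the right endpoint of `J(I)`. -/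
noncomputable def jHi (Cl : W → Set Λ) (CI : ι → Set W) (Q : Set Λ) (N : ℕ → Set Λ)
    (k : ℕ) (I : ι) : ℕ :=
  sSup (JIset Cl CI Q N k I)

/-- `I ∈ rest(Q)` with `J(I) = [j₁, j₂]` is discarded if there are
`v, v' ∈ I'(Q) ∖ C(I)` with `{j₁−1, j₁} ⊆ J(v)` and `{j₂, j₂+1} ⊆ J(v')`. -/
def Discarded (Cl : W → Set Λ) (CI : ι → Set W) (Q : Set Λ) (N : ℕ → Set Λ)
    (k : ℕ) (I : ι) : Prop :=
  (∃ v ∈ IprimeQ Cl Q N k \ CI I,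
      jLo Cl CI Q N k I - 1 ∈ Jnat Cl N k v ∧ jLo Cl CI Q N k I ∈ Jnat Cl N k v) ∧
  (∃ v ∈ IprimeQ Cl Q N k \ CI I,
      jHi Cl CI Q N k I ∈ Jnat Cl N k v ∧ jHi Cl CI Q N k I + 1 ∈ Jnat Cl N k v)

/-- `outer(Nᵢ)`: the non-discarded components of `rest(Q)` assigned to `Nᵢ`. -/
def outerSet (Cl : W → Set Λ) (CI : ι → Set W) (Q : Set Λ) (N : ℕ → Set Λ)
    (k : ℕ) (i : ℕ) : Set ι :=
  {I | I ∈ restQ Cl CI Q N k ∧ ¬ Discarded Cl CI Q N k I ∧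
    ((jLo Cl CI Q N k I = jHi Cl CI Q N k I ∧ i = jLo Cl CI Q N k I) ∨
     (jLo Cl CI Q N k I < jHi Cl CI Q N k I ∧ i = jLo Cl CI Q N k I ∧
       ¬ ∃ v ∈ IprimeQ Cl Q N k \ CI I,
           jLo Cl CI Q N k I - 1 ∈ Jnat Cl N k v ∧
           jLo Cl CI Q N k I ∈ Jnat Cl N k v) ∨
     (jLo Cl CI Q N k I < jHi Cl CI Q N k I ∧ i = jHi Cl CI Q N k I ∧
       ¬ ∃ v ∈ IprimeQ Cl Q N k \ CI I,
           jHi Cl CI Q N k I ∈ Jnat Cl N k v ∧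
           jHi Cl CI Q N k I + 1 ∈ Jnat Cl N k v))}

/-- `comp(Nᵢ) = middle_Q(Nᵢ) ∪ inner(Nᵢ) ∪ outer(Nᵢ)`. -/
def compSet (Cl : W → Set Λ) (CI : ι → Set W) (Q : Set Λ) (N : ℕ → Set Λ)
    (k : ℕ) (i : ℕ) : Set ι :=
  middleSet Cl CI Q (N i) ∪ innerSet Cl CI (N i) ∪ outerSet Cl CI Q N k i

/-- The relation `⊑_Q` on (indices of) children of the Q-node: for `a < b`,
`N_a ⊑_Q N_b` iff some `v ∈ I'(Q)` has `a ∉ J(v)` and `{b, b+1} ⊆ J(v)`; for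
`b < a`, `N_a ⊑_Q N_b` iff some `v ∈ I'(Q)` has `{b−1, b} ⊆ J(v)` and `a ∉ J(v)`. -/
def sqQN (Cl : W → Set Λ) (Q : Set Λ) (N : ℕ → Set Λ) (k : ℕ) (a b : ℕ) : Prop :=
  (a < b ∧ ∃ v ∈ IprimeQ Cl Q N k,
      a ∉ Jnat Cl N k v ∧ b ∈ Jnat Cl N k v ∧ b + 1 ∈ Jnat Cl N k v) ∨
  (b < a ∧ ∃ v ∈ IprimeQ Cl Q N k,
      b - 1 ∈ Jnat Cl N k v ∧ b ∈ Jnat Cl N k v ∧ a ∉ Jnat Cl N k v)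

/-!
The common leaves of the vertices of a component form a nonempty set, its core, which lies in `N i`
as soon as the component is in `middle_Q(N i)` or `inner(N i)`; so disjointness of the `N i` settles
these two parts. For a component `I` of `rest(Q)` the indices `i` for which `N i` meets the core lie
in `J(I) = [j₁, j₂]`. If `j₁ < j₂`, property (Q) applied to `(j₁, j₂)` provides a vertex outside
`C(I)` which blocks one of the two ends, and if `I` is not discarded the other end is not blocked.
Hence exactly one index receives `I`.
-/

section

variable {Cl : W → Set Λ} {CI : ι → Set W} {A B Q : Set Λ} {N : ℕ → Set Λ} {k i : ℕ} {I : ι}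

theorem Compatible.subset_or_subset_of_mem {v : W} {x : Λ} (h : Compatible Cl v A)
    (hxv : x ∈ Cl v) (hxA : x ∈ A) : Cl v ⊆ A ∨ A ⊆ Cl v := by
  rcases h with h | h | h
  · exact Or.inl h
  · exact Or.inr h
  · exact absurd h (show (Cl v ∩ A).Nonempty from ⟨x, hxv, hxA⟩).ne_empty

theorem Uset_union_Eset (Cl : W → Set Λ) (A : Set Λ) : Uset Cl A ∪ Eset Cl A = {v | A ⊆ Cl v} := by
  ext v
  simp only [Uset, Eset, mem_union, mem_ofPred_eq, subset_iff_ssubset_or_eq, eq_comm, or_comm]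

theorem mem_innerSet_singleton {ℓ : Λ} : I ∈ innerSet Cl CI {ℓ} ↔ CI I = leafC Cl ℓ := by
  simp [innerSet]

theorem mem_innerSet_iff_of_not_singleton (hA : ¬ ∃ ℓ, A = {ℓ}) :
    I ∈ innerSet Cl CI A ↔ (CI I ∩ Iset Cl A).Nonempty ∧ {v | A ⊆ Cl v} ⊆ CI I := by
  have hstrict : (CI I ∩ Iset Cl A).Nonempty → ¬ CI I ⊆ {v | A ⊆ Cl v} :=
    fun ⟨_, hv, hvA⟩ hsub => hvA.2 (hsub hv)
  simp only [innerSet, mem_ofPred_eq, Uset_union_Eset, ssubset_iff_subset_not_subset]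
  constructor
  · rintro (⟨ℓ, hℓ, -⟩ | ⟨-, hne, hsub, -⟩)
    · exact absurd ⟨ℓ, hℓ⟩ hA
    · exact ⟨hne, hsub⟩
  · exact fun ⟨hne, hsub⟩ => Or.inr ⟨hA, hne, hsub, hstrict hne⟩

theorem not_singleton_of_mem_innerSet_of_ssubset (hI : I ∈ innerSet Cl CI A) (hAB : A ⊂ B) :
    ¬ ∃ ℓ, B = {ℓ} := by
  rintro ⟨ℓ, rfl⟩
  obtain rfl : A = ∅ := ssubset_singleton_iff.1 hAB
  rcases hI with ⟨m, hm, -⟩ | ⟨-, ⟨v, -, hv⟩, -⟩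
  · exact singleton_ne_empty m hm.symm
  · exact hv.2 (empty_subset _)

theorem exists_mem_leafC_inter_Iset {ℓ : Λ}
    (hleaf : ∀ ℓ ℓ' : Λ, ℓ ≠ ℓ' → ¬ leafC Cl ℓ ⊆ leafC Cl ℓ')
    (hcompat : ∀ v, Compatible Cl v B) (hℓB : {ℓ} ⊂ B) : (leafC Cl ℓ ∩ Iset Cl B).Nonempty := by
  obtain ⟨x, hxB, hxℓ⟩ := exists_of_ssubset hℓB
  obtain ⟨v, hℓv, hxv⟩ := not_subset.1 (hleaf ℓ x (Ne.symm hxℓ))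
  have hBv : ¬ B ⊆ Cl v := fun h => hxv (h hxB)
  have hvB := ((hcompat v).subset_or_subset_of_mem hℓv (hℓB.1 rfl)).resolve_right hBv
  exact ⟨v, hℓv, hvB, hBv⟩

theorem innerSet_subset_innerSet (hleaf : ∀ ℓ ℓ' : Λ, ℓ ≠ ℓ' → ¬ leafC Cl ℓ ⊆ leafC Cl ℓ')
    (hcompat : ∀ v, Compatible Cl v B) (hAB : A ⊆ B) : innerSet Cl CI A ⊆ innerSet Cl CI B := by
  intro I hI
  rcases hAB.eq_or_ssubset with rfl | hss
  · exact hI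
  rw [mem_innerSet_iff_of_not_singleton (not_singleton_of_mem_innerSet_of_ssubset hI hss)]
  by_cases hA : ∃ ℓ, A = {ℓ}
  · obtain ⟨ℓ, rfl⟩ := hA
    rw [mem_innerSet_singleton.1 hI]
    exact ⟨exists_mem_leafC_inter_Iset hleaf hcompat hss, fun v hBv => hBv (hAB rfl)⟩
  · obtain ⟨⟨v, hv, hvA⟩, hsub⟩ := (mem_innerSet_iff_of_not_singleton hA).1 hI
    exact ⟨⟨v, hv, hvA.trans_subset hAB⟩, fun w hBw => hsub (hAB.trans hBw)⟩

/-- The core of a component `I`: the leaves common to all vertices of `C(I)`. The Helly condition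
says that it is nonempty. -/
def core (Cl : W → Set Λ) (CI : ι → Set W) (I : ι) : Set Λ := ⋂ v ∈ CI I, Cl v

theorem core_subset_of_mem {v : W} (hv : v ∈ CI I) : core Cl CI I ⊆ Cl v := biInter_subset_of_mem hv

theorem core_subset_of_mem_innerSet (hleaf : ∀ ℓ ℓ' : Λ, ℓ ≠ ℓ' → ¬ leafC Cl ℓ ⊆ leafC Cl ℓ')
    (hI : I ∈ innerSet Cl CI A) : core Cl CI I ⊆ A := by
  rcases hI with ⟨ℓ, rfl, hC⟩ | ⟨-, ⟨v, hv, hvA⟩, -⟩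
  · intro x hx
    have hsub : leafC Cl ℓ ⊆ leafC Cl x := fun v hv =>
      core_subset_of_mem (hC.ge hv) hx
    by_contra hxℓ
    exact hleaf ℓ x (Ne.symm hxℓ) hsub
  · exact (core_subset_of_mem hv).trans hvA.1

theorem core_subset_of_mem_middleSet_union_innerSet
    (hleaf : ∀ ℓ ℓ' : Λ, ℓ ≠ ℓ' → ¬ leafC Cl ℓ ⊆ leafC Cl ℓ')
    (hI : I ∈ middleSet Cl CI B A ∪ innerSet Cl CI A) : core Cl CI I ⊆ A := by
  rcases hI with ⟨-, -, v, hv, hvA⟩ | hI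
  · exact (core_subset_of_mem hv).trans hvA
  · exact core_subset_of_mem_innerSet hleaf hI

theorem mem_restQ_iff :
    I ∈ restQ Cl CI Q N k ↔ I ∈ innerSet Cl CI Q ∧
      ∀ i ∈ Icc 1 k, I ∉ middleSet Cl CI Q (N i) ∪ innerSet Cl CI (N i) := by
  simp only [restQ, mem_sdiff, mem_iUnion₂, not_exists]

theorem exists_mem_inter_Iset_of_mem_restQ (hunion : ⋃ i ∈ Icc 1 k, N i = Q)
    (hI : I ∈ restQ Cl CI Q N k) : (CI I ∩ Iset Cl Q).Nonempty := by
  obtain ⟨hIQ, hrest⟩ := mem_restQ_iff.1 hI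
  by_cases hQ : ∃ ℓ, Q = {ℓ}
  · obtain ⟨ℓ, rfl⟩ := hQ
    obtain ⟨i, hi, hℓi⟩ := mem_iUnion₂.1 (hunion.ge rfl)
    have hNi : N i = {ℓ} :=
      ((subset_biUnion_of_mem hi).trans hunion.le).antisymm (singleton_subset_iff.2 hℓi)
    exact absurd (Or.inr (hNi ▸ hIQ)) (hrest i hi)
  · exact ((mem_innerSet_iff_of_not_singleton hQ).1 hIQ).1

theorem inter_Iset_subset_IprimeQ_of_mem_restQ (hI : I ∈ restQ Cl CI Q N k) :
    CI I ∩ Iset Cl Q ⊆ IprimeQ Cl Q N k := by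
  obtain ⟨hIQ, hrest⟩ := mem_restQ_iff.1 hI
  rintro v ⟨hv, hvQ⟩
  refine ⟨hvQ, fun hvN => ?_⟩
  obtain ⟨i, hi, hvi⟩ := mem_iUnion₂.1 hvN
  by_cases hinner : I ∈ innerSet Cl CI (N i)
  · exact hrest i hi (Or.inr hinner)
  · exact hrest i hi (Or.inl ⟨hIQ, hinner, v, hv, hvi⟩)

theorem exists_mem_inter_IprimeQ_of_mem_restQ (hunion : ⋃ i ∈ Icc 1 k, N i = Q)
    (hI : I ∈ restQ Cl CI Q N k) : (CI I ∩ IprimeQ Cl Q N k).Nonempty :=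
  let ⟨v, hv⟩ := exists_mem_inter_Iset_of_mem_restQ hunion hI
  ⟨v, hv.1, inter_Iset_subset_IprimeQ_of_mem_restQ hI hv⟩

theorem JIset_subset_Jnat {v : W} (hv : v ∈ CI I ∩ IprimeQ Cl Q N k) :
    JIset Cl CI Q N k I ⊆ Jnat Cl N k v :=
  biInter_subset_of_mem hv

theorem mem_JIset_of_mem_core {x : Λ} (hcompat : ∀ v, Compatible Cl v (N i)) (hi : i ∈ Icc 1 k)
    (hx : x ∈ core Cl CI I) (hxi : x ∈ N i) : i ∈ JIset Cl CI Q N k I := by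
  refine mem_iInter₂.2 fun v hv => ⟨hi, ?_⟩
  have hvN : ¬ Cl v ⊆ N i := fun h => hv.2.2 (mem_iUnion₂.2 ⟨i, hi, h⟩)
  exact ((hcompat v).subset_or_subset_of_mem (core_subset_of_mem hv.1 hx) hxi).resolve_left hvN

theorem JIset_nonempty_of_mem_restQ (hcore : (core Cl CI I).Nonempty)
    (hunion : ⋃ i ∈ Icc 1 k, N i = Q) (hcompat : ∀ v, ∀ i ∈ Icc 1 k, Compatible Cl v (N i))
    (hI : I ∈ restQ Cl CI Q N k) : (JIset Cl CI Q N k I).Nonempty := by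
  obtain ⟨x, hx⟩ := hcore
  obtain ⟨v, hv, hvQ⟩ := exists_mem_inter_Iset_of_mem_restQ hunion hI
  have hxQ : x ∈ Q := hvQ.1 (core_subset_of_mem hv hx)
  obtain ⟨i, hi, hxi⟩ := mem_iUnion₂.1 (hunion.ge hxQ)
  exact ⟨i, mem_JIset_of_mem_core (fun v => hcompat v i hi) hi hx hxi⟩

theorem JIset_subset_Icc_of_mem_restQ (hunion : ⋃ i ∈ Icc 1 k, N i = Q)
    (hI : I ∈ restQ Cl CI Q N k) : JIset Cl CI Q N k I ⊆ Icc 1 k :=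
  let ⟨_, hv⟩ := exists_mem_inter_IprimeQ_of_mem_restQ hunion hI
  fun _ hi => (JIset_subset_Jnat hv hi).1

theorem jLo_mem_JIset (hne : (JIset Cl CI Q N k I).Nonempty) :
    jLo Cl CI Q N k I ∈ JIset Cl CI Q N k I :=
  Nat.sInf_mem hne

theorem jHi_mem_JIset (hne : (JIset Cl CI Q N k I).Nonempty)
    (hsub : JIset Cl CI Q N k I ⊆ Icc 1 k) : jHi Cl CI Q N k I ∈ JIset Cl CI Q N k I :=
  Nat.sSup_mem hne (bddAbove_Icc.mono hsub)

theorem jLo_le_jHi (hne : (JIset Cl CI Q N k I).Nonempty)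
    (hsub : JIset Cl CI Q N k I ⊆ Icc 1 k) : jLo Cl CI Q N k I ≤ jHi Cl CI Q N k I :=
  Nat.sInf_le (jHi_mem_JIset hne hsub)

theorem iUnion_subset_of_isIntervalIn_Jnat {v : W} (hint : IsIntervalIn (Jnat Cl N k v))
    (hone : 1 ∈ Jnat Cl N k v) (hk : k ∈ Jnat Cl N k v) : ⋃ i ∈ Icc 1 k, N i ⊆ Cl v :=
  iUnion₂_subset fun i hi => (hint 1 i k hi.1 hi.2 hone hk).2

theorem jLo_jHi_ne_of_mem_restQ (hunion : ⋃ i ∈ Icc 1 k, N i = Q)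
    (hJint : ∀ v ∈ IprimeQ Cl Q N k, IsIntervalIn (Jnat Cl N k v))
    (hne : (JIset Cl CI Q N k I).Nonempty) (hI : I ∈ restQ Cl CI Q N k) :
    (jLo Cl CI Q N k I, jHi Cl CI Q N k I) ≠ (1, k) := by
  obtain ⟨v, hv⟩ := exists_mem_inter_IprimeQ_of_mem_restQ hunion hI
  rw [Ne, Prod.mk.injEq]
  rintro ⟨hlo, hhi⟩
  have hone := JIset_subset_Jnat hv (jLo_mem_JIset hne)
  have hk := JIset_subset_Jnat hv (jHi_mem_JIset hne (JIset_subset_Icc_of_mem_restQ hunion hI))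
  rw [hlo] at hone
  rw [hhi] at hk
  have hQv := iUnion_subset_of_isIntervalIn_Jnat (hJint v hv.2) hone hk
  exact hv.2.1.2 (hunion ▸ hQv)

/-- The left end of `J(I) = [j₁, j₂]` is blocked if some `v ∈ I'(Q) ∖ C(I)` has
`{j₁ - 1, j₁} ⊆ J(v)`. At `j₁ = 1` this fails, as `0 ∉ J(v)`. -/
def LeftBlocked (Cl : W → Set Λ) (CI : ι → Set W) (Q : Set Λ) (N : ℕ → Set Λ) (k : ℕ) (I : ι) :
    Prop :=
  ∃ v ∈ IprimeQ Cl Q N k \ CI I,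
    jLo Cl CI Q N k I - 1 ∈ Jnat Cl N k v ∧ jLo Cl CI Q N k I ∈ Jnat Cl N k v

/-- The right end of `J(I) = [j₁, j₂]` is blocked if some `v ∈ I'(Q) ∖ C(I)` has
`{j₂, j₂ + 1} ⊆ J(v)`. -/
def RightBlocked (Cl : W → Set Λ) (CI : ι → Set W) (Q : Set Λ) (N : ℕ → Set Λ) (k : ℕ) (I : ι) :
    Prop :=
  ∃ v ∈ IprimeQ Cl Q N k \ CI I,
    jHi Cl CI Q N k I ∈ Jnat Cl N k v ∧ jHi Cl CI Q N k I + 1 ∈ Jnat Cl N k v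

theorem discarded_iff :
    Discarded Cl CI Q N k I ↔ LeftBlocked Cl CI Q N k I ∧ RightBlocked Cl CI Q N k I :=
  Iff.rfl

/-- Property (Q): any two children of `Q`, other than the pair of the two extreme ones, are
separated by a vertex of `I'(Q)` whose interval leaves out one of them and reaches beyond the other
in the direction away from the first. -/
def PropertyQ (Cl : W → Set Λ) (Q : Set Λ) (N : ℕ → Set Λ) (k : ℕ) : Prop :=
  ∀ j₁ j₂ : ℕ, 1 ≤ j₁ → j₁ < j₂ → j₂ ≤ k → (j₁, j₂) ≠ (1, k) →
    ∃ v ∈ IprimeQ Cl Q N k,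
      (j₁ ∉ Jnat Cl N k v ∧ j₂ ∈ Jnat Cl N k v ∧ j₂ + 1 ∈ Jnat Cl N k v) ∨
      (j₁ - 1 ∈ Jnat Cl N k v ∧ j₁ ∈ Jnat Cl N k v ∧ j₂ ∉ Jnat Cl N k v)

theorem PropertyQ.leftBlocked_or_rightBlocked (hQ : PropertyQ Cl Q N k)
    (hne : (JIset Cl CI Q N k I).Nonempty) (hsub : JIset Cl CI Q N k I ⊆ Icc 1 k)
    (hends : (jLo Cl CI Q N k I, jHi Cl CI Q N k I) ≠ (1, k))
    (hlt : jLo Cl CI Q N k I < jHi Cl CI Q N k I) :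
    LeftBlocked Cl CI Q N k I ∨ RightBlocked Cl CI Q N k I := by
  have hlo := jLo_mem_JIset hne
  have hhi := jHi_mem_JIset hne hsub
  obtain ⟨v, hvQ, ⟨hlov, hhiv, hhiv'⟩ | ⟨hlov', hlov, hhiv⟩⟩ :=
    hQ _ _ (hsub hlo).1 hlt (hsub hhi).2 hends
  · have hvI : v ∉ CI I := fun hv => hlov (JIset_subset_Jnat ⟨hv, hvQ⟩ hlo)
    exact Or.inr ⟨v, ⟨hvQ, hvI⟩, hhiv, hhiv'⟩
  · have hvI : v ∉ CI I := fun hv => hhiv (JIset_subset_Jnat ⟨hv, hvQ⟩ hhi)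
    exact Or.inl ⟨v, ⟨hvQ, hvI⟩, hlov', hlov⟩

open Classical in
/-- The index of the child whose outer set receives the non-discarded component `I` of `rest(Q)`:
the right end of `J(I)` if the left end is blocked, and the left end otherwise. -/
noncomputable def outerIndex (Cl : W → Set Λ) (CI : ι → Set W) (Q : Set Λ) (N : ℕ → Set Λ) (k : ℕ)
    (I : ι) : ℕ :=
  if LeftBlocked Cl CI Q N k I then jHi Cl CI Q N k I else jLo Cl CI Q N k I

theorem outerIndex_mem_JIset (hne : (JIset Cl CI Q N k I).Nonempty)
    (hsub : JIset Cl CI Q N k I ⊆ Icc 1 k) : outerIndex Cl CI Q N k I ∈ JIset Cl CI Q N k I := by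
  unfold outerIndex
  split_ifs
  · exact jHi_mem_JIset hne hsub
  · exact jLo_mem_JIset hne

theorem mem_outerSet_iff_eq_outerIndex (hI : I ∈ restQ Cl CI Q N k)
    (hdisc : ¬ Discarded Cl CI Q N k I) (hle : jLo Cl CI Q N k I ≤ jHi Cl CI Q N k I)
    (hblocked : jLo Cl CI Q N k I < jHi Cl CI Q N k I →
      LeftBlocked Cl CI Q N k I ∨ RightBlocked Cl CI Q N k I) :
    I ∈ outerSet Cl CI Q N k i ↔ i = outerIndex Cl CI Q N k I := by
  have hmem : I ∈ outerSet Cl CI Q N k i ↔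
      (jLo Cl CI Q N k I = jHi Cl CI Q N k I ∧ i = jLo Cl CI Q N k I) ∨
      (jLo Cl CI Q N k I < jHi Cl CI Q N k I ∧ i = jLo Cl CI Q N k I ∧
        ¬ LeftBlocked Cl CI Q N k I) ∨
      (jLo Cl CI Q N k I < jHi Cl CI Q N k I ∧ i = jHi Cl CI Q N k I ∧
        ¬ RightBlocked Cl CI Q N k I) :=
    ⟨fun h => h.2.2, fun h => ⟨hI, hdisc, h⟩⟩
  rw [discarded_iff] at hdisc
  rw [hmem, outerIndex]
  rcases hle.eq_or_lt with heq | hlt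
  · simp [heq]
  · have hleft_or_right := hblocked hlt
    split_ifs with hleft <;> simp only [hlt.ne, hlt, true_and, false_and, false_or] <;> tauto

theorem mem_outerSet_iff (hcore : (core Cl CI I).Nonempty) (hunion : ⋃ i ∈ Icc 1 k, N i = Q)
    (hcompat : ∀ v, ∀ i ∈ Icc 1 k, Compatible Cl v (N i))
    (hJint : ∀ v ∈ IprimeQ Cl Q N k, IsIntervalIn (Jnat Cl N k v)) (hQ : PropertyQ Cl Q N k) :
    I ∈ outerSet Cl CI Q N k i ↔
      I ∈ restQ Cl CI Q N k ∧ ¬ Discarded Cl CI Q N k I ∧ i = outerIndex Cl CI Q N k I := by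
  have hiff (hI : I ∈ restQ Cl CI Q N k) (hdisc : ¬ Discarded Cl CI Q N k I) :
      I ∈ outerSet Cl CI Q N k i ↔ i = outerIndex Cl CI Q N k I := by
    have hne := JIset_nonempty_of_mem_restQ hcore hunion hcompat hI
    have hsub := JIset_subset_Icc_of_mem_restQ hunion hI
    have hends := jLo_jHi_ne_of_mem_restQ hunion hJint hne hI
    exact mem_outerSet_iff_eq_outerIndex hI hdisc (jLo_le_jHi hne hsub)
      (hQ.leftBlocked_or_rightBlocked hne hsub hends)
  exact ⟨fun h => ⟨h.1, h.2.1, (hiff h.1 h.2.1).1 h⟩, fun ⟨hI, hdisc, h⟩ => (hiff hI hdisc).2 h⟩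

theorem compSet_subset_innerSet (hleaf : ∀ ℓ ℓ' : Λ, ℓ ≠ ℓ' → ¬ leafC Cl ℓ ⊆ leafC Cl ℓ')
    (hcompat : ∀ v, Compatible Cl v Q) (hNQ : N i ⊆ Q) :
    compSet Cl CI Q N k i ⊆ innerSet Cl CI Q := by
  rintro I ((hI | hI) | hI)
  · exact hI.1
  · exact innerSet_subset_innerSet hleaf hcompat hNQ hI
  · exact hI.1.1

theorem pairwiseDisjoint_compSet (hleaf : ∀ ℓ ℓ' : Λ, ℓ ≠ ℓ' → ¬ leafC Cl ℓ ⊆ leafC Cl ℓ')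
    (hcore : ∀ I, (core Cl CI I).Nonempty) (hdisj : (Icc 1 k).PairwiseDisjoint N)
    (hunion : ⋃ i ∈ Icc 1 k, N i = Q) (hcompat : ∀ v, ∀ i ∈ Icc 1 k, Compatible Cl v (N i))
    (hJint : ∀ v ∈ IprimeQ Cl Q N k, IsIntervalIn (Jnat Cl N k v)) (hQ : PropertyQ Cl Q N k) :
    (Icc 1 k).PairwiseDisjoint (compSet Cl CI Q N k) := by
  intro i hi j hj hij
  refine disjoint_left.2 fun I hIi hIj => hij ?_
  rcases hIi with hIi | hIi <;> rcases hIj with hIj | hIj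
  · obtain ⟨x, hx⟩ := hcore I
    exact hdisj.elim_set hi hj x (core_subset_of_mem_middleSet_union_innerSet hleaf hIi hx)
      (core_subset_of_mem_middleSet_union_innerSet hleaf hIj hx)
  · exact absurd hIi ((mem_restQ_iff.1 hIj.1).2 i hi)
  · exact absurd hIj ((mem_restQ_iff.1 hIi.1).2 j hj)
  · have hi' := (mem_outerSet_iff (hcore I) hunion hcompat hJint hQ).1 hIi
    have hj' := (mem_outerSet_iff (hcore I) hunion hcompat hJint hQ).1 hIj
    exact hi'.2.2.trans hj'.2.2.symm

theorem exists_mem_compSet (hcore : (core Cl CI I).Nonempty) (hunion : ⋃ i ∈ Icc 1 k, N i = Q)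
    (hcompat : ∀ v, ∀ i ∈ Icc 1 k, Compatible Cl v (N i))
    (hJint : ∀ v ∈ IprimeQ Cl Q N k, IsIntervalIn (Jnat Cl N k v)) (hQ : PropertyQ Cl Q N k)
    (hI : I ∈ innerSet Cl CI Q) (hdisc : ¬ (I ∈ restQ Cl CI Q N k ∧ Discarded Cl CI Q N k I)) :
    ∃ i ∈ Icc 1 k, I ∈ compSet Cl CI Q N k i := by
  by_cases hrest : I ∈ restQ Cl CI Q N k
  · have hsub := JIset_subset_Icc_of_mem_restQ hunion hrest
    have hne := JIset_nonempty_of_mem_restQ hcore hunion hcompat hrest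
    refine ⟨outerIndex Cl CI Q N k I, hsub (outerIndex_mem_JIset hne hsub), Or.inr ?_⟩
    exact (mem_outerSet_iff hcore hunion hcompat hJint hQ).2
      ⟨hrest, fun h => hdisc ⟨hrest, h⟩, rfl⟩
  · simp only [mem_restQ_iff, hI, true_and, not_forall, not_not] at hrest
    obtain ⟨i, hi, hIi⟩ := hrest
    exact ⟨i, hi, Or.inl hIi⟩

end

theorem stmt12_general (Cl : W → Set Λ) (CI : ι → Set W)
    (hleaf : ∀ ℓ ℓ' : Λ, ℓ ≠ ℓ' → ¬ leafC Cl ℓ ⊆ leafC Cl ℓ')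
    (hcore : ∀ I, (core Cl CI I).Nonempty) (Q : Set Λ) (k : ℕ) (N : ℕ → Set Λ)
    (hdisj : (Icc 1 k).PairwiseDisjoint N) (hunion : ⋃ i ∈ Icc 1 k, N i = Q)
    (hcompatQ : ∀ v, Compatible Cl v Q) (hcompatN : ∀ v, ∀ i ∈ Icc 1 k, Compatible Cl v (N i))
    (hJint : ∀ v ∈ IprimeQ Cl Q N k, IsIntervalIn (Jnat Cl N k v)) (hQ : PropertyQ Cl Q N k) :
    (∀ i ∈ Icc 1 k, compSet Cl CI Q N k i ⊆ innerSet Cl CI Q) ∧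
    (∀ i ∈ Icc 1 k, ∀ j ∈ Icc 1 k, i ≠ j →
      compSet Cl CI Q N k i ∩ compSet Cl CI Q N k j = ∅) ∧
    (∀ I ∈ innerSet Cl CI Q, ¬ (I ∈ restQ Cl CI Q N k ∧ Discarded Cl CI Q N k I) →
      ∃! i, i ∈ Icc 1 k ∧ I ∈ compSet Cl CI Q N k i) := by
  have hcomp := pairwiseDisjoint_compSet hleaf hcore hdisj hunion hcompatN hJint hQ
  refine ⟨fun i hi => ?_, fun i hi j hj hij => (hcomp hi hj hij).inter_eq, fun I hI hdisc => ?_⟩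
  · exact compSet_subset_innerSet hleaf hcompatQ (hunion ▸ subset_biUnion_of_mem hi)
  · obtain ⟨i, hi, hIi⟩ := exists_mem_compSet (hcore I) hunion hcompatN hJint hQ hI hdisc
    exact ⟨i, ⟨hi, hIi⟩, fun j ⟨hj, hIj⟩ => hcomp.elim_set hj hi I hIj hIi⟩

theorem stmt12 [Fintype Λ] [Fintype W] [Fintype ι]
    (Cl : W → Set Λ) (CI : ι → Set W)
    (hCl : ∀ v, (Cl v).Nonempty)
    (hleaf : ∀ ℓ ℓ' : Λ, ℓ ≠ ℓ' → ¬ leafC Cl ℓ ⊆ leafC Cl ℓ')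
    (hCI : ∀ I, (CI I).Nonempty)
    (hHelly : ∀ I, (⋂ v ∈ CI I, Cl v).Nonempty)
    (Q : Set Λ) (hQne : Q.Nonempty)
    (k : ℕ) (hk : 3 ≤ k)
    (N : ℕ → Set Λ)
    (hNne : ∀ i ∈ Set.Icc 1 k, (N i).Nonempty)
    (hNdisj : ∀ i ∈ Set.Icc 1 k, ∀ j ∈ Set.Icc 1 k, i ≠ j → N i ∩ N j = ∅)
    (hNunion : (⋃ i ∈ Set.Icc 1 k, N i) = Q)
    (hcompatQ : ∀ v, Compatible Cl v Q)
    (hcompatN : ∀ v, ∀ i ∈ Set.Icc 1 k, Compatible Cl v (N i))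
    (hJint : ∀ v ∈ IprimeQ Cl Q N k, IsIntervalIn (Jnat Cl N k v))
    (hQprop : ∀ j₁ j₂ : ℕ, 1 ≤ j₁ → j₁ < j₂ → j₂ ≤ k → (j₁, j₂) ≠ (1, k) →
      ∃ v ∈ IprimeQ Cl Q N k,
        (j₁ ∉ Jnat Cl N k v ∧ j₂ ∈ Jnat Cl N k v ∧ j₂ + 1 ∈ Jnat Cl N k v) ∨
        (j₁ - 1 ∈ Jnat Cl N k v ∧ j₁ ∈ Jnat Cl N k v ∧ j₂ ∉ Jnat Cl N k v)) :
    (∀ i ∈ Set.Icc 1 k, compSet Cl CI Q N k i ⊆ innerSet Cl CI Q) ∧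
    (∀ i ∈ Set.Icc 1 k, ∀ j ∈ Set.Icc 1 k, i ≠ j →
        compSet Cl CI Q N k i ∩ compSet Cl CI Q N k j = ∅) ∧
    (∀ I ∈ innerSet Cl CI Q,
        ¬ (I ∈ restQ Cl CI Q N k ∧ Discarded Cl CI Q N k I) →
        ∃! i, i ∈ Set.Icc 1 k ∧ I ∈ compSet Cl CI Q N k i) :=
  stmt12_general Cl CI hleaf hHelly Q k N
    (fun i hi j hj hij => disjoint_iff_inter_eq_empty.2 (hNdisj i hi j hj hij))
    hNunion hcompatQ hcompatN hJint hQprop
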